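/- Let s ≥ 1 and k ∈ ℤ^s_{≥1}. There is a bijection between the set of faces of Γ_k and the set of pairs (w, σ) where w ∈ W_{s−1} and σ is a face of Γ_{r_w(k)*w̃}, given by (w, σ) ↦ σ ∪ g_w; under this bijection the dimension of the face σ ∪ g_w of Γ_k equals |w| + dim σ. (The number of zero-dimensional faces hence satisfies V_k = Σ_{w ∈ W_{s−1}, |w| = 0} V_{r_w(k)}, which is the coefficient-wise form of the Gusev–Kiritchenko–Timorin partial differential equation for the exponential generating function of vertex numbers.) -/

import Mathlib

open Classical

noncomputable section

/-- Partial sums of the (0-indexed) sequence `k`: `nseq k i = k 0 + ⋯ + k (i-1)`;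
so `nseq k i` is the paper's `n_i` for the sequence `(k_1, …, k_s) = (k 0, …, k (s-1))`. -/
def nseq (k : ℕ → ℕ) (i : ℕ) : ℕ := ∑ j ∈ Finset.range i, k j

/-- The set of terminal vertices `T_k = {(n_i, n - n_i) : 0 ≤ i ≤ s}` of the ladder diagram. -/
def terminals (s : ℕ) (k : ℕ → ℕ) : Set (ℕ × ℕ) :=
  {v | ∃ i ≤ s, v = (nseq k i, nseq k s - nseq k i)}

/-- The vertex set of the ladder diagram `Γ_k`. -/
def ladderV (s : ℕ) (k : ℕ → ℕ) : Set (ℕ × ℕ) :=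
  {v | ∃ t ∈ terminals s k, v.1 ≤ t.1 ∧ v.2 ≤ t.2}

/-- A unit grid step: one step to the right or one step up. -/
def gridStep (v w : ℕ × ℕ) : Prop :=
  w = (v.1 + 1, v.2) ∨ w = (v.1, v.2 + 1)

/-- The edge set of the ladder diagram `Γ_k`. -/
def ladderE (s : ℕ) (k : ℕ → ℕ) : Set ((ℕ × ℕ) × (ℕ × ℕ)) :=
  {e | e.1 ∈ ladderV s k ∧ e.2 ∈ ladderV s k ∧ gridStep e.1 e.2}

/-- A combinatorial (directed) graph in the grid `ℤ_{≥0} × ℤ_{≥0}`,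
given by a set of vertices and a set of edges. -/
@[ext] structure LGraph where
  V : Set (ℕ × ℕ)
  E : Set ((ℕ × ℕ) × (ℕ × ℕ))

/-- Subgraph inclusion order on grid graphs. -/
instance : PartialOrder LGraph where
  le γ γ' := γ.V ⊆ γ'.V ∧ γ.E ⊆ γ'.E
  le_refl γ := ⟨subset_rfl, subset_rfl⟩
  le_trans a b c h h' := ⟨h.1.trans h'.1, h.2.trans h'.2⟩
  le_antisymm a b h h' := LGraph.ext (subset_antisymm h.1 h'.1) (subset_antisymm h.2 h'.2)

/-- The ladder diagram `Γ_k` as a grid graph. -/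
def ladder (s : ℕ) (k : ℕ → ℕ) : LGraph :=
  ⟨ladderV s k, ladderE s k⟩

/-- A positive path: (the graph of) a shortest path in the ladder diagram `Γ_k`
from the origin `(0,0)` to a terminal vertex. -/
def IsPositivePath (s : ℕ) (k : ℕ → ℕ) (p : LGraph) : Prop :=
  ∃ (m : ℕ) (f : ℕ → ℕ × ℕ),
    f 0 = (0, 0) ∧ f m ∈ terminals s k ∧
    (∀ i < m, gridStep (f i) (f (i + 1))) ∧
    (∀ i ≤ m, f i ∈ ladderV s k) ∧
    p.V = {v | ∃ i ≤ m, v = f i} ∧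
    p.E = {e | ∃ i < m, e = (f i, f (i + 1))}

/-- A face of the ladder diagram `Γ_k`: a subgraph which contains all terminal
vertices and is a union of positive paths. -/
def IsLadderFace (s : ℕ) (k : ℕ → ℕ) (γ : LGraph) : Prop :=
  terminals s k ⊆ γ.V ∧
  ∃ P : Set LGraph, (∀ p ∈ P, IsPositivePath s k p) ∧
    γ.V = ⋃ p ∈ P, LGraph.V p ∧ γ.E = ⋃ p ∈ P, LGraph.E p

/-- The dimension (first Betti number) of a face of a ladder diagram:
`|E(γ)| - |V(γ)| + 1`. -/
def ldim (γ : LGraph) : ℤ :=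
  (γ.E.ncard : ℤ) - (γ.V.ncard : ℤ) + 1

/-- The index set `I = {(i,j) : i,j ≥ 1, i+j ≤ n}` of the coordinates of a
Gelfand–Cetlin pattern. -/
def GCIdx (n : ℕ) : Set (ℕ × ℕ) := {p | 1 ≤ p.1 ∧ 1 ≤ p.2 ∧ p.1 + p.2 ≤ n}

/-- The entries of a Gelfand–Cetlin pattern `x`, extended by the boundary
condition `x_{i, n+1-i} = λ_i`. -/
def gcEntry (n : ℕ) (lam : ℕ → ℝ) (x : GCIdx n → ℝ) (p : ℕ × ℕ) : ℝ :=
  if h : p ∈ GCIdx n then x ⟨p, h⟩ else lam p.1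

/-- The Gelfand–Cetlin polytope `P_λ`: the set of points `(x_{i,j})_{(i,j) ∈ I}`
with `x_{i,j+1} ≥ x_{i,j} ≥ x_{i+1,j}` for all `(i,j) ∈ I`, where
`x_{i,n+1-i} = λ_i`. -/
def GCPoly (n : ℕ) (lam : ℕ → ℝ) : Set (GCIdx n → ℝ) :=
  {x | ∀ i j : ℕ, (i, j) ∈ GCIdx n →
    gcEntry n lam x (i, j) ≤ gcEntry n lam x (i, j + 1) ∧
    gcEntry n lam x (i + 1, j) ≤ gcEntry n lam x (i, j)}

/-- The subset of `P_λ` obtained by turning the inequalities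
`x_{i,j+1} ≥ x_{i,j}` for `(i,j) ∈ SH` and `x_{i,j} ≥ x_{i+1,j}` for
`(i,j) ∈ SV` into equalities. -/
def GCFaceOf (n : ℕ) (lam : ℕ → ℝ) (SH SV : Set (ℕ × ℕ)) : Set (GCIdx n → ℝ) :=
  {x | x ∈ GCPoly n lam ∧
    (∀ p ∈ SH, gcEntry n lam x (p.1, p.2 + 1) = gcEntry n lam x p) ∧
    (∀ p ∈ SV, gcEntry n lam x p = gcEntry n lam x (p.1 + 1, p.2))}

/-- A face of the GC polytope: a nonempty solution set of the system obtained
by replacing some of the defining inequalities by equalities. -/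
def IsGCFace (n : ℕ) (lam : ℕ → ℝ) (F : Set (GCIdx n → ℝ)) : Prop :=
  F.Nonempty ∧ ∃ SH SV : Set (ℕ × ℕ), SH ⊆ GCIdx n ∧ SV ⊆ GCIdx n ∧
    F = GCFaceOf n lam SH SV

/-- The dimension of (a face of) the GC polytope: the dimension of its affine span. -/
def GCdim (n : ℕ) (F : Set (GCIdx n → ℝ)) : ℕ :=
  Module.finrank ℝ (affineSpan ℝ F).direction

/-- `lam` (1-indexed) is weakly decreasing with block structure `k`: it is
constant on each block `(n_{i-1}, n_i]` and strictly decreases between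
consecutive blocks. -/
def HasBlockStructure (s : ℕ) (k : ℕ → ℕ) (lam : ℕ → ℝ) : Prop :=
  (∀ i < s, ∀ a b : ℕ, nseq k i < a → a ≤ b → b ≤ nseq k (i + 1) → lam a = lam b) ∧
  (∀ i : ℕ, 1 ≤ i → i < s → lam (nseq k i + 1) < lam (nseq k i))

/-- The edge set of the graph `φ(F)` associated to a subset `F` of the GC polytope. -/
def phiE (n : ℕ) (lam : ℕ → ℝ) (F : Set (GCIdx n → ℝ)) :
    Set ((ℕ × ℕ) × (ℕ × ℕ)) :=
  {e | (∃ i < n, e = ((0, i), (0, i + 1)) ∨ e = ((i, 0), (i + 1, 0))) ∨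
    (∃ i j : ℕ, (i, j) ∈ GCIdx n ∧ e = ((i - 1, j), (i, j)) ∧
      ∃ x ∈ F, gcEntry n lam x (i, j) < gcEntry n lam x (i, j + 1)) ∨
    (∃ i j : ℕ, (i, j) ∈ GCIdx n ∧ e = ((i, j - 1), (i, j)) ∧
      ∃ x ∈ F, gcEntry n lam x (i + 1, j) < gcEntry n lam x (i, j))}

/-- The graph `φ(F)`: its edges are given by `phiE` and its vertices are the
endpoints of its edges. -/
def phiGC (n : ℕ) (lam : ℕ → ℝ) (F : Set (GCIdx n → ℝ)) : LGraph where
  V := {v | ∃ e ∈ phiE n lam F, v = e.1 ∨ v = e.2}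
  E := phiE n lam F

/-- The map `ψ`: for a subgraph `γ`, the set of points of `P_λ` where the
inequalities corresponding to the missing edges of `γ` become equalities. -/
def psiGC (n : ℕ) (lam : ℕ → ℝ) (γ : LGraph) : Set (GCIdx n → ℝ) :=
  {x | x ∈ GCPoly n lam ∧ ∀ i j : ℕ, (i, j) ∈ GCIdx n →
    (((i - 1, j), (i, j)) ∉ γ.E → gcEntry n lam x (i, j) = gcEntry n lam x (i, j + 1)) ∧
    (((i, j - 1), (i, j)) ∉ γ.E → gcEntry n lam x (i, j) = gcEntry n lam x (i + 1, j))}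
/-- The recursively defined point `x̄` of the proof of Lemma 2.6 (bijectivity):
`x̄_{i,j} = λ_i` if `i + j = n + 1`, and for `i + j ≤ n` it is determined from
`x̄_{i,j+1}` and `x̄_{i+1,j}` according to which of the two edges
`((i-1,j),(i,j))`, `((i,j-1),(i,j))` belong to `E`. -/
def barX (n : ℕ) (lam : ℕ → ℝ) (E : Set ((ℕ × ℕ) × (ℕ × ℕ))) : ℕ → ℕ → ℝ
  | i, j =>
    if h1 : n + 1 ≤ i + j then lam i
    else if h2 : ((i - 1, j), (i, j)) ∈ E then
      if h3 : ((i, j - 1), (i, j)) ∈ E then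
        (barX n lam E i (j + 1) + barX n lam E (i + 1) j) / 2
      else barX n lam E (i + 1) j
    else barX n lam E i (j + 1)
  termination_by i j => n + 1 - (i + j)
  decreasing_by all_goals omega

/-- `α, β : ℕ → ℕ` encode an element
`w = ((α_1,β_1),…,(α_{s-1},β_{s-1})) ∈ W_{s-1}`, with the conventions
`α_0 = 0`, `β_0 = 1`, `α_s = 1`, `β_s = 0`. -/
def IsW (s : ℕ) (α β : ℕ → ℕ) : Prop :=
  (∀ i : ℕ, 1 ≤ i → i < s →
    (α i, β i) = (1, 0) ∨ (α i, β i) = (0, 1) ∨ (α i, β i) = (1, 1)) ∧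
  α 0 = 0 ∧ β 0 = 1 ∧ α s = 1 ∧ β s = 0

/-- The edge set of the subgraph `g_w` of `Γ_k`: the horizontal edge into the
terminal vertex `v_i` when `α_i = 1` and the vertical edge into `v_i` when
`β_i = 1`. -/
def gwE (s : ℕ) (k α β : ℕ → ℕ) : Set ((ℕ × ℕ) × (ℕ × ℕ)) :=
  {e | ∃ i ≤ s,
    (α i = 1 ∧
      e = ((nseq k i - 1, nseq k s - nseq k i), (nseq k i, nseq k s - nseq k i))) ∨
    (β i = 1 ∧
      e = ((nseq k i, nseq k s - nseq k i - 1), (nseq k i, nseq k s - nseq k i)))}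

/-- The subgraph `g_w` of `Γ_k`. -/
def gwGraph (s : ℕ) (k α β : ℕ → ℕ) : LGraph where
  V := {v | ∃ e ∈ gwE s k α β, v = e.1 ∨ v = e.2}
  E := gwE s k α β

/-- The interleaved sequence `r_w(k) * w̃` of length `2s - 1` (0-indexed):
entry `2j` is `k''_{j+1} = k_{j+1} + 1 - α_{j+1} - β_j` and entry `2j + 1` is
`w̃_{j+1} = α_{j+1} β_{j+1}`. -/
def rstar (s : ℕ) (k α β : ℕ → ℕ) (t : ℕ) : ℕ :=
  if t % 2 = 0 then k (t / 2) + 1 - α (t / 2 + 1) - β (t / 2)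
  else α (t / 2 + 1) * β (t / 2 + 1)

/-- `α`-value of one of the three symbols `(1,0), (0,1), (1,1)`,
encoded as `0, 1, 2 : Fin 3` respectively. -/
def aW3 (c : Fin 3) : ℕ := if c = 1 then 0 else 1

/-- `β`-value of one of the three symbols `(1,0), (0,1), (1,1)`,
encoded as `0, 1, 2 : Fin 3` respectively. -/
def bW3 (c : Fin 3) : ℕ := if c = 0 then 0 else 1

/-- The function `α` of the element of `W_{s-1}` encoded by
`c : Fin (s-1) → Fin 3` (with the conventions `α_0 = 0`, `α_s = 1`). -/
def alph (s : ℕ) (c : Fin (s - 1) → Fin 3) (i : ℕ) : ℕ :=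
  if i = 0 then 0 else if h : i - 1 < s - 1 then aW3 (c ⟨i - 1, h⟩) else 1

/-- The function `β` of the element of `W_{s-1}` encoded by
`c : Fin (s-1) → Fin 3` (with the conventions `β_0 = 1`, `β_s = 0`). -/
def bet (s : ℕ) (c : Fin (s - 1) → Fin 3) (i : ℕ) : ℕ :=
  if i = 0 then 1 else if h : i - 1 < s - 1 then bW3 (c ⟨i - 1, h⟩) else 0

/-- The interleaved sequence `r_w(k) * w̃` (of length `2s - 1`, 0-indexed) for
the element `w ∈ W_{s-1}` encoded by `c`. -/
def newk (s : ℕ) (c : Fin (s - 1) → Fin 3) (k : ℕ → ℕ) (t : ℕ) : ℕ :=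
  if t % 2 = 0 then k (t / 2) + 1 - alph s c (t / 2 + 1) - bet s c (t / 2)
  else alph s c (t / 2 + 1) * bet s c (t / 2 + 1)

/-- `|w| = Σ_{i=1}^{s-1} α_i β_i` for the element `w ∈ W_{s-1}` encoded by `c`. -/
def wsize (s : ℕ) (c : Fin (s - 1) → Fin 3) : ℕ :=
  ∑ j ∈ Finset.range (s - 1), alph s c (j + 1) * bet s c (j + 1)

/-- The subgraph `g_w` of `Γ_k` for the element `w ∈ W_{s-1}` encoded by `c`. -/
def gwGraph3 (s : ℕ) (k : ℕ → ℕ) (c : Fin (s - 1) → Fin 3) : LGraph :=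
  gwGraph s k (alph s c) (bet s c)

/-- Union of two grid graphs (union of vertex sets and of edge sets). -/
def ugraph (γ δ : LGraph) : LGraph := ⟨γ.V ∪ δ.V, γ.E ∪ δ.E⟩

/-- The generating function `F_k(t) = Σ_{γ face of Γ_k} t^{dim γ}` of the
`f`-vector of the ladder diagram `Γ_k`, as a formal power series in `t`:
the coefficient of `t^d` is the number of faces of `Γ_k` of dimension `d`. -/
def fpol (s : ℕ) (k : ℕ → ℕ) : PowerSeries ℤ :=
  PowerSeries.mk fun d =>
    (Set.ncard {γ : LGraph | IsLadderFace s k γ ∧ ldim γ = (d : ℤ)} : ℤ)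

/-- The operator `Π_{i=1}^{s-1} (∂/∂x_i + ∂/∂x_{i+1} + t ∂/∂y_i)` applied to a
polynomial in the variables `x_1, x_2, … , y_1, y_2, …` (the variable `x_{i+1}`
is `Sum.inl i` and `y_{i+1}` is `Sum.inr i`) over `ℚ[t]`. -/
def Lfold (s : ℕ) (f : MvPolynomial (ℕ ⊕ ℕ) (Polynomial ℚ)) :
    MvPolynomial (ℕ ⊕ ℕ) (Polynomial ℚ) :=
  (List.range (s - 1)).foldl
    (fun g i =>
      MvPolynomial.pderiv (Sum.inl i) g + MvPolynomial.pderiv (Sum.inl (i + 1)) g +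
        (Polynomial.X : Polynomial ℚ) • MvPolynomial.pderiv (Sum.inr i) g) f

/-- The operator `D_w = Π_{i=1}^{s-1} (∂/∂x_i)^{1-α_i} (∂/∂x_{i+1})^{1-β_i}
(t ∂/∂y_i)^{α_i β_i}` for the element `w ∈ W_{s-1}` encoded by
`c : Fin (s-1) → Fin 3` (`0 ↦ (1,0)`, `1 ↦ (0,1)`, `2 ↦ (1,1)`). -/
def DfoldC (s : ℕ) (c : Fin (s - 1) → Fin 3)
    (f : MvPolynomial (ℕ ⊕ ℕ) (Polynomial ℚ)) : MvPolynomial (ℕ ⊕ ℕ) (Polynomial ℚ) :=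
  (List.finRange (s - 1)).foldl
    (fun g i =>
      if c i = 0 then MvPolynomial.pderiv (Sum.inl ((i : ℕ) + 1)) g
      else if c i = 1 then MvPolynomial.pderiv (Sum.inl (i : ℕ)) g
      else (Polynomial.X : Polynomial ℚ) • MvPolynomial.pderiv (Sum.inr (i : ℕ)) g) f

/-- The operator `D_w` for the element `w ∈ W_{s-1}` encoded by `α, β : ℕ → ℕ`. -/
def DfoldW (s : ℕ) (α β : ℕ → ℕ)
    (f : MvPolynomial (ℕ ⊕ ℕ) (Polynomial ℚ)) : MvPolynomial (ℕ ⊕ ℕ) (Polynomial ℚ) :=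
  (List.range (s - 1)).foldl
    (fun g j =>
      if α (j + 1) = 1 ∧ β (j + 1) = 1 then
        (Polynomial.X : Polynomial ℚ) • MvPolynomial.pderiv (Sum.inr j) g
      else if α (j + 1) = 1 then MvPolynomial.pderiv (Sum.inl (j + 1)) g
      else MvPolynomial.pderiv (Sum.inl j) g) f

/-- Substitution of `0` for all the variables `y_j = Sum.inr j`. -/
def setYzero :
    MvPolynomial (ℕ ⊕ ℕ) (Polynomial ℚ) →ₐ[Polynomial ℚ] MvPolynomial (ℕ ⊕ ℕ) (Polynomial ℚ) :=
  MvPolynomial.aeval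
    (Sum.elim (fun i => MvPolynomial.X (Sum.inl i)) fun _ => (0 : MvPolynomial (ℕ ⊕ ℕ) (Polynomial ℚ)))
end

section Aux

/-- Intrinsic description of a face with terminal set `T` at level `n`. -/
structure FaceI (n : ℕ) (T : Set (ℕ × ℕ)) (γ : LGraph) : Prop where
  term : T ⊆ γ.V
  edge : ∀ e ∈ γ.E, gridStep e.1 e.2 ∧ e.1 ∈ γ.V ∧ e.2 ∈ γ.V
  inc : ∀ v ∈ γ.V, v = (0, 0) ∨ ∃ u, (u, v) ∈ γ.E
  bd : ∀ v ∈ γ.V, v.1 + v.2 ≤ n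
  out : ∀ v ∈ γ.V, v ∈ T ∨ ∃ u, (v, u) ∈ γ.E

theorem gridStep_sum {v w : ℕ × ℕ} (h : gridStep v w) : w.1 + w.2 = v.1 + v.2 + 1 := by
  rcases h with h | h <;> simp [h] <;> omega

theorem gridStep_le {v w : ℕ × ℕ} (h : gridStep v w) : v.1 ≤ w.1 ∧ v.2 ≤ w.2 := by
  rcases h with h | h <;> simp [h]

theorem nseq_mono (k : ℕ → ℕ) : Monotone (nseq k) := by
  intro i j hij
  exact Finset.sum_le_sum_of_subset (Finset.range_mono hij)

theorem terminals_sum {s : ℕ} {k : ℕ → ℕ} {v : ℕ × ℕ} (h : v ∈ terminals s k) :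
    v.1 + v.2 = nseq k s := by
  obtain ⟨i, hi, rfl⟩ := h
  have := nseq_mono k hi
  simp only
  omega

theorem path_back {n : ℕ} {T : Set (ℕ × ℕ)} {γ : LGraph} (h : FaceI n T γ) :
    ∀ m : ℕ, ∀ v ∈ γ.V, v.1 + v.2 = m → ∃ f : ℕ → ℕ × ℕ, f 0 = (0, 0) ∧ f m = v ∧
      (∀ i < m, (f i, f (i + 1)) ∈ γ.E) := by
  intro m
  induction m with
  | zero =>
    intro v hv hm
    refine ⟨fun _ => (0, 0), rfl, ?_, by simp⟩
    ext <;> simp <;> omega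
  | succ m ih =>
    intro v hv hm
    rcases h.inc v hv with h0 | ⟨u, hu⟩
    · subst h0; simp at hm
    · have he := h.edge _ hu
      have hs := gridStep_sum he.1
      simp only at hs
      obtain ⟨f, f0, fm, fe⟩ := ih u he.2.1 (by omega)
      refine ⟨Function.update f (m + 1) v, ?_, by simp, ?_⟩
      · rw [Function.update_of_ne (by omega)]; exact f0
      · intro i hi
        rw [Function.update_of_ne (by omega)]
        by_cases him : i = m
        · subst him; simpa [fm] using hu
        · rw [Function.update_of_ne (by omega)]
          exact fe i (by omega)

theorem path_fwd {n : ℕ} {T : Set (ℕ × ℕ)} {γ : LGraph} (hT : ∀ v ∈ T, v.1 + v.2 = n)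
    (h : FaceI n T γ) :
    ∀ d m : ℕ, m + d = n → ∀ f : ℕ → ℕ × ℕ, f m ∈ γ.V → (f m).1 + (f m).2 = m →
      (∀ i < m, (f i, f (i + 1)) ∈ γ.E) →
      ∃ g : ℕ → ℕ × ℕ, (∀ i ≤ m, g i = f i) ∧ g n ∈ T ∧ (∀ i < n, (g i, g (i + 1)) ∈ γ.E) := by
  intro d
  induction d with
  | zero =>
    intro m hm f hf hs fe
    have hm' : m = n := by omega
    subst hm'
    refine ⟨f, fun _ _ => rfl, ?_, fe⟩
    rcases h.out _ hf with h1 | ⟨u, hu⟩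
    · exact h1
    · have he := h.edge _ hu
      have h1 := gridStep_sum he.1
      have h2 := h.bd _ he.2.2
      simp only at h1 h2
      omega
  | succ d ih =>
    intro m hm f hf hs fe
    rcases h.out _ hf with h1 | ⟨u, hu⟩
    · have := hT _ h1; omega
    · have he := h.edge _ hu
      have h1 := gridStep_sum he.1
      simp only at h1
      obtain ⟨g, g1, g2, g3⟩ := ih (m + 1) (by omega) (Function.update f (m + 1) u)
        (by simpa using he.2.2) (by simp; omega) (by
          intro i hi
          rw [Function.update_of_ne (by omega)]
          by_cases him : i = m
          · subst him; simpa using hu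
          · rw [Function.update_of_ne (by omega)]
            exact fe i (by omega))
      refine ⟨g, fun i hi => ?_, g2, g3⟩
      rw [g1 i (by omega), Function.update_of_ne (by omega)]

theorem chain_pos {s : ℕ} {k : ℕ → ℕ} {γ : LGraph} (h : FaceI (nseq k s) (terminals s k) γ)
    (g : ℕ → ℕ × ℕ) (g0 : g 0 = (0, 0)) (gn : g (nseq k s) ∈ terminals s k)
    (ge : ∀ i < nseq k s, (g i, g (i + 1)) ∈ γ.E) :
    ∃ p : LGraph, IsPositivePath s k p ∧ p.V ⊆ γ.V ∧ p.E ⊆ γ.E ∧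
      (∀ i ≤ nseq k s, g i ∈ p.V) ∧ (∀ i < nseq k s, (g i, g (i + 1)) ∈ p.E) := by
  set n := nseq k s with hn
  have hV : ∀ i ≤ n, g i ∈ γ.V := by
    intro i hi
    rcases Nat.lt_or_ge i n with h1 | h1
    · exact (h.edge _ (ge i h1)).2.1
    · have : i = n := by omega
      subst this; exact h.term gn
  have hle : ∀ d i, i + d = n → (g i).1 ≤ (g n).1 ∧ (g i).2 ≤ (g n).2 := by
    intro d
    induction d with
    | zero => intro i hi; have : i = n := by omega
              subst this; simp
    | succ d ih =>
      intro i hi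
      have h1 := ih (i + 1) (by omega)
      have h2 := gridStep_le (h.edge _ (ge i (by omega))).1
      simp only at h2
      omega
  refine ⟨⟨{v | ∃ i ≤ n, v = g i}, {e | ∃ i < n, e = (g i, g (i + 1))}⟩,
    ⟨n, g, g0, gn, fun i hi => (h.edge _ (ge i hi)).1, fun i hi => ?_, rfl, rfl⟩, ?_, ?_, ?_, ?_⟩
  · exact ⟨g n, gn, hle (n - i) i (by omega)⟩
  · rintro v ⟨i, hi, rfl⟩; exact hV i hi
  · rintro v ⟨i, hi, rfl⟩; exact ge i hi
  · intro i hi; exact ⟨i, hi, rfl⟩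
  · intro i hi; exact ⟨i, hi, rfl⟩

theorem face_iff (s : ℕ) (k : ℕ → ℕ) (γ : LGraph) :
    IsLadderFace s k γ ↔ FaceI (nseq k s) (terminals s k) γ := by
  constructor
  · rintro ⟨hT, P, hP, hV, hE⟩
    have key : ∀ p ∈ P, ∃ f : ℕ → ℕ × ℕ, f 0 = (0, 0) ∧ f (nseq k s) ∈ terminals s k ∧
        (∀ i < nseq k s, gridStep (f i) (f (i + 1))) ∧
        (∀ i ≤ nseq k s, (f i).1 + (f i).2 = i) ∧
        p.V = {v | ∃ i ≤ nseq k s, v = f i} ∧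
        p.E = {e | ∃ i < nseq k s, e = (f i, f (i + 1))} := by
      intro p hp
      obtain ⟨m, f, f0, fm, fs, -, pV, pE⟩ := hP p hp
      have hsum : ∀ i ≤ m, (f i).1 + (f i).2 = i := by
        intro i
        induction i with
        | zero => intro _; simp [f0]
        | succ i ih =>
          intro hi
          rw [gridStep_sum (fs i (by omega)), ih (by omega)]
      have hm : m = nseq k s := by
        rw [← terminals_sum fm, hsum m le_rfl]
      subst hm
      exact ⟨f, f0, fm, fs, hsum, pV, pE⟩
    refine ⟨hT, ?_, ?_, ?_, ?_⟩
    · intro e he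
      rw [hE] at he
      simp only [Set.mem_iUnion] at he
      obtain ⟨p, hp, he⟩ := he
      obtain ⟨f, f0, fm, fs, fsum, pV, pE⟩ := key p hp
      rw [pE] at he
      obtain ⟨i, hi, rfl⟩ := he
      refine ⟨fs i hi, ?_, ?_⟩ <;> rw [hV] <;> simp only [Set.mem_iUnion] <;>
        refine ⟨p, hp, ?_⟩ <;> rw [pV]
      · exact ⟨i, hi.le, rfl⟩
      · exact ⟨i + 1, hi, rfl⟩
    · intro v hv
      rw [hV] at hv
      simp only [Set.mem_iUnion] at hv
      obtain ⟨p, hp, hv⟩ := hv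
      obtain ⟨f, f0, fm, fs, fsum, pV, pE⟩ := key p hp
      rw [pV] at hv
      obtain ⟨i, hi, rfl⟩ := hv
      rcases i with _ | i
      · left; exact f0
      · right
        refine ⟨f i, ?_⟩
        rw [hE]; simp only [Set.mem_iUnion]
        refine ⟨p, hp, ?_⟩
        rw [pE]
        exact ⟨i, hi, rfl⟩
    · intro v hv
      rw [hV] at hv
      simp only [Set.mem_iUnion] at hv
      obtain ⟨p, hp, hv⟩ := hv
      obtain ⟨f, f0, fm, fs, fsum, pV, pE⟩ := key p hp
      rw [pV] at hv
      obtain ⟨i, hi, rfl⟩ := hv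
      rw [fsum i hi]; exact hi
    · intro v hv
      rw [hV] at hv
      simp only [Set.mem_iUnion] at hv
      obtain ⟨p, hp, hv⟩ := hv
      obtain ⟨f, f0, fm, fs, fsum, pV, pE⟩ := key p hp
      rw [pV] at hv
      obtain ⟨i, hi, rfl⟩ := hv
      rcases Nat.lt_or_ge i (nseq k s) with h1 | h1
      · right
        refine ⟨f (i + 1), ?_⟩
        rw [hE]; simp only [Set.mem_iUnion]
        refine ⟨p, hp, ?_⟩
        rw [pE]
        exact ⟨i, h1, rfl⟩
      · left
        have : i = nseq k s := by omega
        rw [this]; exact fm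
  · intro h
    have hTs : ∀ v ∈ terminals s k, v.1 + v.2 = nseq k s := fun v hv => terminals_sum hv
    refine ⟨h.term, {p | IsPositivePath s k p ∧ p.V ⊆ γ.V ∧ p.E ⊆ γ.E}, fun p hp => hp.1, ?_, ?_⟩
    · apply subset_antisymm
      · intro v hv
        obtain ⟨f, f0, fm, fe⟩ := path_back h _ v hv rfl
        have hb := h.bd v hv
        obtain ⟨g, g1, g2, g3⟩ := path_fwd hTs h (nseq k s - (v.1 + v.2)) (v.1 + v.2) (by omega) f
          (by rw [fm]; exact hv) (by rw [fm]) fe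
        obtain ⟨p, hp, pV, pE, gV, gE⟩ := chain_pos h g (by rw [g1 0 (by omega), f0]) g2 g3
        simp only [Set.mem_iUnion]
        refine ⟨p, ⟨hp, pV, pE⟩, ?_⟩
        have := gV _ hb
        rwa [g1 _ le_rfl, fm] at this
      · intro v hv
        simp only [Set.mem_iUnion] at hv
        obtain ⟨p, hp, hv⟩ := hv
        exact hp.2.1 hv
    · apply subset_antisymm
      · rintro ⟨u, v⟩ he
        obtain ⟨h1, h2, h3⟩ := h.edge _ he
        simp only at h1 h2 h3
        have hs := gridStep_sum h1
        obtain ⟨f, f0, fm, fe⟩ := path_back h _ u h2 rfl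
        have hb := h.bd v h3
        set m := u.1 + u.2 with hm
        obtain ⟨g, g1, g2, g3⟩ := path_fwd hTs h (nseq k s - (m + 1)) (m + 1) (by omega)
          (Function.update f (m + 1) v)
          (by simpa using h3) (by simp; omega) (by
            intro i hi
            rw [Function.update_of_ne (by omega)]
            by_cases him : i = m
            · rw [him, fm]; simpa using he
            · rw [Function.update_of_ne (by omega)]
              exact fe i (by omega))
        obtain ⟨p, hp, pV, pE, gV, gE⟩ := chain_pos h g
          (by rw [g1 0 (by omega), Function.update_of_ne (by omega), f0]) g2 g3
        simp only [Set.mem_iUnion]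
        refine ⟨p, ⟨hp, pV, pE⟩, ?_⟩
        have := gE m (by omega)
        rwa [g1 (m + 1) le_rfl, g1 m (by omega), Function.update_of_ne (by omega), fm,
          Function.update_self] at this
      · intro v hv
        simp only [Set.mem_iUnion] at hv
        obtain ⟨p, hp, hv⟩ := hv
        exact hp.2.2 hv

/-- graph of a set of edges -/
def egraph (G : Set ((ℕ × ℕ) × (ℕ × ℕ))) : LGraph :=
  ⟨{v | ∃ e ∈ G, v = e.1 ∨ v = e.2}, G⟩

/-- truncation -/
def trunc (n : ℕ) (γ : LGraph) : LGraph :=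
  ⟨{v | v ∈ γ.V ∧ v.1 + v.2 ≤ n}, {e | e ∈ γ.E ∧ e.2.1 + e.2.2 ≤ n}⟩

/-- top edges -/
def topE (n : ℕ) (γ : LGraph) : Set ((ℕ × ℕ) × (ℕ × ℕ)) :=
  {e | e ∈ γ.E ∧ e.2.1 + e.2.2 = n}

/-- compatible top layer of edges -/
structure TopG (n : ℕ) (T T' : Set (ℕ × ℕ)) (G : Set ((ℕ × ℕ) × (ℕ × ℕ))) : Prop where
  step : ∀ e ∈ G, gridStep e.1 e.2
  mem : ∀ e ∈ G, e.2 ∈ T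
  cov : ∀ v ∈ T, ∃ e ∈ G, e.2 = v
  src : T' = {v | ∃ e ∈ G, v = e.1}
  sum : ∀ v ∈ T, v.1 + v.2 = n + 1

theorem face_union {n : ℕ} {T T' : Set (ℕ × ℕ)} {G : Set ((ℕ × ℕ) × (ℕ × ℕ))} {σ : LGraph}
    (hG : TopG n T T' G) (h : FaceI n T' σ) : FaceI (n + 1) T (ugraph σ (egraph G)) := by
  have hsrc : ∀ e ∈ G, e.1 ∈ σ.V := fun e he => h.term (by rw [hG.src]; exact ⟨e, he, rfl⟩)
  refine ⟨?_, ?_, ?_, ?_, ?_⟩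
  · intro v hv
    obtain ⟨e, he, rfl⟩ := hG.cov v hv
    exact Or.inr ⟨e, he, Or.inr rfl⟩
  · rintro e (he | he)
    · obtain ⟨a, b, c⟩ := h.edge e he
      exact ⟨a, Or.inl b, Or.inl c⟩
    · exact ⟨hG.step e he, Or.inr ⟨e, he, Or.inl rfl⟩, Or.inr ⟨e, he, Or.inr rfl⟩⟩
  · have h1 : ∀ v ∈ σ.V, v = (0, 0) ∨ ∃ u, (u, v) ∈ (ugraph σ (egraph G)).E := by
      intro v hv
      rcases h.inc v hv with h0 | ⟨u, hu⟩
      · exact Or.inl h0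
      · exact Or.inr ⟨u, Or.inl hu⟩
    rintro v (hv | ⟨e, he, rfl | rfl⟩)
    · exact h1 v hv
    · exact h1 _ (hsrc e he)
    · exact Or.inr ⟨e.1, Or.inr he⟩
  · rintro v (hv | ⟨e, he, rfl | rfl⟩)
    · have := h.bd v hv; omega
    · have := h.bd _ (hsrc e he); omega
    · exact (hG.sum _ (hG.mem e he)).le
  · have h1 : ∀ v ∈ σ.V, ∃ u, (v, u) ∈ (ugraph σ (egraph G)).E := by
      intro v hv
      rcases h.out v hv with h0 | ⟨u, hu⟩
      · rw [hG.src] at h0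
        obtain ⟨e, he, rfl⟩ := h0
        exact ⟨e.2, Or.inr he⟩
      · exact ⟨u, Or.inl hu⟩
    rintro v (hv | ⟨e, he, rfl | rfl⟩)
    · exact Or.inr (h1 v hv)
    · exact Or.inr (h1 _ (hsrc e he))
    · exact Or.inl (hG.mem e he)

theorem trunc_union {n : ℕ} {T T' : Set (ℕ × ℕ)} {G : Set ((ℕ × ℕ) × (ℕ × ℕ))} {σ : LGraph}
    (hG : TopG n T T' G) (h : FaceI n T' σ) :
    trunc n (ugraph σ (egraph G)) = σ ∧ topE (n + 1) (ugraph σ (egraph G)) = G := by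
  have hsrc : ∀ e ∈ G, e.1 ∈ σ.V := fun e he => h.term (by rw [hG.src]; exact ⟨e, he, rfl⟩)
  have hsum : ∀ e ∈ G, e.2.1 + e.2.2 = n + 1 := fun e he => hG.sum _ (hG.mem e he)
  have hσ : ∀ e ∈ σ.E, e.2.1 + e.2.2 ≤ n := fun e he => h.bd _ (h.edge e he).2.2
  refine ⟨LGraph.ext ?_ ?_, ?_⟩
  · apply subset_antisymm
    · rintro v ⟨hv | ⟨e, he, rfl | rfl⟩, hb⟩
      · exact hv
      · exact hsrc e he
      · have := hsum e he; omega
    · intro v hv; exact ⟨Or.inl hv, h.bd v hv⟩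
  · apply subset_antisymm
    · rintro e ⟨he | he, hb⟩
      · exact he
      · have := hsum e he; omega
    · intro e he; exact ⟨Or.inl he, hσ e he⟩
  · apply subset_antisymm
    · rintro e ⟨he | he, hb⟩
      · have := hσ e he; omega
      · exact he
    · intro e he; exact ⟨Or.inr he, hsum e he⟩

theorem trunc_face {n : ℕ} {T : Set (ℕ × ℕ)} {γ : LGraph} (hT : ∀ v ∈ T, v.1 + v.2 = n + 1)
    (h : FaceI (n + 1) T γ) :
    FaceI n {v | ∃ e ∈ topE (n + 1) γ, v = e.1} (trunc n γ) ∧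
      γ = ugraph (trunc n γ) (egraph (topE (n + 1) γ)) := by
  constructor
  · refine ⟨?_, ?_, ?_, ?_, ?_⟩
    · rintro v ⟨e, ⟨he, hs⟩, rfl⟩
      have h1 := h.edge e he
      have h2 := gridStep_sum h1.1
      exact ⟨h1.2.1, by omega⟩
    · rintro e ⟨he, hs⟩
      have h1 := h.edge e he
      have h2 := gridStep_sum h1.1
      exact ⟨h1.1, ⟨h1.2.1, by omega⟩, ⟨h1.2.2, hs⟩⟩
    · rintro v ⟨hv, hs⟩
      rcases h.inc v hv with h0 | ⟨u, hu⟩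
      · exact Or.inl h0
      · exact Or.inr ⟨u, hu, hs⟩
    · rintro v ⟨hv, hs⟩; exact hs
    · rintro v ⟨hv, hs⟩
      rcases h.out v hv with h0 | ⟨u, hu⟩
      · have := hT v h0; omega
      · have h1 := h.bd _ (h.edge _ hu).2.2
        simp only at h1
        by_cases hc : u.1 + u.2 = n + 1
        · exact Or.inl ⟨(v, u), ⟨hu, hc⟩, rfl⟩
        · exact Or.inr ⟨u, hu, by simp only; omega⟩
  · refine LGraph.ext (subset_antisymm ?_ ?_) (subset_antisymm ?_ ?_)
    · intro v hv
      by_cases hc : v.1 + v.2 ≤ n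
      · exact Or.inl ⟨hv, hc⟩
      · have hb := h.bd v hv
        rcases h.inc v hv with h0 | ⟨u, hu⟩
        · subst h0; simp at hc
        · exact Or.inr ⟨(u, v), ⟨hu, by simp only; omega⟩, Or.inr rfl⟩
    · rintro v (hv | ⟨e, he, rfl | rfl⟩)
      · exact hv.1
      · exact (h.edge e he.1).2.1
      · exact (h.edge e he.1).2.2
    · intro e he
      have hb := h.bd _ (h.edge e he).2.2
      by_cases hc : e.2.1 + e.2.2 ≤ n
      · exact Or.inl ⟨he, hc⟩
      · exact Or.inr ⟨he, by omega⟩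
    · rintro e (he | he)
      · exact he.1
      · exact he.1

/-- bounding box of vertices -/
def boxV (n : ℕ) : Set (ℕ × ℕ) := Set.Iic (n, n)

theorem boxV_finite (n : ℕ) : (boxV n).Finite := Set.finite_Iic _

theorem face_sub {n : ℕ} {T : Set (ℕ × ℕ)} {γ : LGraph} (h : FaceI n T γ) :
    γ.V ⊆ boxV n ∧ γ.E ⊆ boxV n ×ˢ boxV n := by
  have hV : γ.V ⊆ boxV n := by
    intro v hv
    have := h.bd v hv
    exact ⟨by simp only; omega, by simp only; omega⟩
  exact ⟨hV, fun e he => ⟨hV (h.edge e he).2.1, hV (h.edge e he).2.2⟩⟩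

theorem face_V_finite {n : ℕ} {T : Set (ℕ × ℕ)} {γ : LGraph} (h : FaceI n T γ) : γ.V.Finite :=
  (boxV_finite n).subset (face_sub h).1

theorem face_E_finite {n : ℕ} {T : Set (ℕ × ℕ)} {γ : LGraph} (h : FaceI n T γ) : γ.E.Finite :=
  ((boxV_finite n).prod (boxV_finite n)).subset (face_sub h).2

theorem faces_finite (s : ℕ) (k : ℕ → ℕ) : {γ : LGraph | IsLadderFace s k γ}.Finite := by
  have h1 := (boxV_finite (nseq k s)).finite_subsets.prod
    ((boxV_finite (nseq k s)).prod (boxV_finite (nseq k s))).finite_subsets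
  refine Set.Finite.of_finite_image (f := fun γ : LGraph => (γ.V, γ.E)) (h1.subset ?_) ?_
  · rintro _ ⟨γ, hγ, rfl⟩
    exact face_sub ((face_iff s k γ).1 hγ)
  · intro a _ b _ hab
    simp only [Prod.mk.injEq] at hab
    exact LGraph.ext hab.1 hab.2

theorem ldim_nonneg {n : ℕ} {T : Set (ℕ × ℕ)} {γ : LGraph} (h : FaceI n T γ) : 0 ≤ ldim γ := by
  have hsub : γ.V ⊆ insert (0, 0) (Prod.snd '' γ.E) := by
    intro v hv
    rcases h.inc v hv with h0 | ⟨u, hu⟩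
    · exact Or.inl h0
    · exact Or.inr ⟨_, hu, rfl⟩
  have hf := face_E_finite h
  have h1 := Set.ncard_le_ncard hsub ((hf.image _).insert _)
  have h2 := Set.ncard_insert_le ((0, 0) : ℕ × ℕ) (Prod.snd '' γ.E)
  have h3 := Set.ncard_image_le (f := Prod.snd) hf
  unfold ldim
  omega

theorem ldim_union {n : ℕ} {T T' : Set (ℕ × ℕ)} {G : Set ((ℕ × ℕ) × (ℕ × ℕ))} {σ : LGraph}
    (hG : TopG n T T' G) (h : FaceI n T' σ) (fG : G.Finite) :
    ldim (ugraph σ (egraph G)) = ldim σ + G.ncard - T.ncard := by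
  have hsrc : ∀ e ∈ G, e.1 ∈ σ.V := fun e he => h.term (by rw [hG.src]; exact ⟨e, he, rfl⟩)
  have hsum : ∀ e ∈ G, e.2.1 + e.2.2 = n + 1 := fun e he => hG.sum _ (hG.mem e he)
  have hσ : ∀ e ∈ σ.E, e.2.1 + e.2.2 ≤ n := fun e he => h.bd _ (h.edge e he).2.2
  have hV : (ugraph σ (egraph G)).V = σ.V ∪ T := by
    apply subset_antisymm
    · rintro v (hv | ⟨e, he, rfl | rfl⟩)
      · exact Or.inl hv
      · exact Or.inl (hsrc e he)
      · exact Or.inr (hG.mem e he)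
    · rintro v (hv | hv)
      · exact Or.inl hv
      · obtain ⟨e, he, rfl⟩ := hG.cov v hv
        exact Or.inr ⟨e, he, Or.inr rfl⟩
  have fT : T.Finite := by
    refine (fG.image Prod.snd).subset ?_
    intro v hv
    obtain ⟨e, he, rfl⟩ := hG.cov v hv
    exact ⟨e, he, rfl⟩
  have d1 : Disjoint σ.V T := by
    rw [Set.disjoint_left]
    intro v hv hv'
    have := h.bd v hv
    have := hG.sum v hv'
    omega
  have d2 : Disjoint σ.E G := by
    rw [Set.disjoint_left]
    intro v hv hv'
    have := hσ v hv
    have := hsum v hv'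
    omega
  have e1 := Set.ncard_union_eq d1 (face_V_finite h) fT
  have e2 : (ugraph σ (egraph G)).E.ncard = σ.E.ncard + G.ncard := Set.ncard_union_eq d2 (face_E_finite h) fG
  unfold ldim
  rw [hV, e1, e2]
  push_cast
  ring

/-! ### Combinatorics of `w` -/

theorem ab_cases {s : ℕ} (c : Fin (s - 1) → Fin 3) (i : ℕ) :
    (alph s c i = 1 ∧ bet s c i = 0) ∨ (alph s c i = 0 ∧ bet s c i = 1) ∨
      (alph s c i = 1 ∧ bet s c i = 1) := by
  unfold alph bet
  split_ifs with h1 h2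
  · simp
  · generalize c _ = x
    revert x
    unfold aW3 bW3
    decide
  · simp

theorem a_zero {s : ℕ} (c : Fin (s - 1) → Fin 3) : alph s c 0 = 0 := by simp [alph]
theorem b_zero {s : ℕ} (c : Fin (s - 1) → Fin 3) : bet s c 0 = 1 := by simp [bet]
theorem a_last {s : ℕ} (hs : 1 ≤ s) (c : Fin (s - 1) → Fin 3) : alph s c s = 1 := by
  unfold alph; rw [if_neg (by omega), dif_neg (by omega)]
theorem b_last {s : ℕ} (hs : 1 ≤ s) (c : Fin (s - 1) → Fin 3) : bet s c s = 0 := by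
  unfold bet; rw [if_neg (by omega), dif_neg (by omega)]

theorem nseq_succ (k : ℕ → ℕ) (i : ℕ) : nseq k (i + 1) = nseq k i + k i :=
  Finset.sum_range_succ _ _

theorem newk_even {s : ℕ} (c : Fin (s - 1) → Fin 3) (k : ℕ → ℕ) (j : ℕ) :
    newk s c k (2 * j) = k j + 1 - alph s c (j + 1) - bet s c j := by
  have h1 : 2 * j / 2 = j := by omega
  have h2 : 2 * j % 2 = 0 := by omega
  simp only [newk, h1, h2, if_true]

theorem newk_odd {s : ℕ} (c : Fin (s - 1) → Fin 3) (k : ℕ → ℕ) (j : ℕ) :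
    newk s c k (2 * j + 1) = alph s c (j + 1) * bet s c (j + 1) := by
  have h1 : (2 * j + 1) / 2 = j := by omega
  have h2 : (2 * j + 1) % 2 = 1 := by omega
  simp [newk, h1, h2]

theorem nseq_new {s : ℕ} (c : Fin (s - 1) → Fin 3) (k : ℕ → ℕ)
    (hk : ∀ i < s, 0 < k i) (j : ℕ) (hj : j < s) :
    nseq (newk s c k) (2 * j) + 1 = nseq k j + bet s c j ∧
    nseq (newk s c k) (2 * j + 1) + alph s c (j + 1) = nseq k (j + 1) := by
  have step : ∀ j < s, nseq (newk s c k) (2 * j) + 1 = nseq k j + bet s c j →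
      nseq (newk s c k) (2 * j + 1) + alph s c (j + 1) = nseq k (j + 1) := by
    intro j hj h
    rw [nseq_succ, nseq_succ, newk_even]
    have := hk j hj
    rcases ab_cases c j with h1 | h1 | h1 <;> rcases ab_cases c (j + 1) with h2 | h2 | h2 <;>
      simp only [h1, h2] at h ⊢ <;> omega
  induction j with
  | zero =>
    have h0 : nseq (newk s c k) (2 * 0) + 1 = nseq k 0 + bet s c 0 := by
      simp [nseq, b_zero]
    exact ⟨h0, step 0 hj h0⟩
  | succ j ih =>
    have h1 := (ih (by omega)).2
    have h0 : nseq (newk s c k) (2 * (j + 1)) + 1 = nseq k (j + 1) + bet s c (j + 1) := by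
      rw [show 2 * (j + 1) = (2 * j + 1) + 1 by ring, nseq_succ, newk_odd]
      rcases ab_cases c (j + 1) with h2 | h2 | h2 <;>
      simp only [h2] at h1 ⊢ <;> omega
    exact ⟨h0, step _ hj h0⟩

theorem nseq_lt {s : ℕ} {k : ℕ → ℕ} (hk : ∀ i < s, 0 < k i) {i j : ℕ} (hij : i < j) (hj : j ≤ s) :
    nseq k i < nseq k j := by
  have h1 : nseq k (i + 1) ≤ nseq k j := nseq_mono k hij
  have h2 := hk i (by omega)
  rw [nseq_succ] at h1
  omega

theorem nseq_inj {s : ℕ} {k : ℕ → ℕ} (hk : ∀ i < s, 0 < k i) {i j : ℕ} (hi : i ≤ s) (hj : j ≤ s)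
    (h : nseq k i = nseq k j) : i = j := by
  rcases lt_trichotomy i j with h1 | h1 | h1
  · have := nseq_lt hk h1 hj; omega
  · exact h1
  · have := nseq_lt hk h1 hi; omega

/-- horizontal edge into `v_i` -/
def hE (s : ℕ) (k : ℕ → ℕ) (i : ℕ) : (ℕ × ℕ) × (ℕ × ℕ) :=
  ((nseq k i - 1, nseq k s - nseq k i), (nseq k i, nseq k s - nseq k i))
/-- vertical edge into `v_i` -/
def vE (s : ℕ) (k : ℕ → ℕ) (i : ℕ) : (ℕ × ℕ) × (ℕ × ℕ) :=
  ((nseq k i, nseq k s - nseq k i - 1), (nseq k i, nseq k s - nseq k i))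

theorem mem_gwE {s : ℕ} {k α β : ℕ → ℕ} {e : (ℕ × ℕ) × (ℕ × ℕ)} : e ∈ gwE s k α β ↔
    ∃ i ≤ s, (α i = 1 ∧ e = hE s k i) ∨ (β i = 1 ∧ e = vE s k i) := Iff.rfl

theorem gw_pos {s : ℕ} (hs : 1 ≤ s) {k : ℕ → ℕ} (hk : ∀ i < s, 0 < k i)
    (c : Fin (s - 1) → Fin 3) {i : ℕ} (hi : i ≤ s) :
    (alph s c i = 1 → 0 < nseq k i) ∧ (bet s c i = 1 → nseq k i < nseq k s) := by
  constructor
  · intro h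
    have : i ≠ 0 := by rintro rfl; rw [a_zero] at h; omega
    have := nseq_lt hk (i := 0) (j := i) (by omega) hi
    omega
  · intro h
    have : i ≠ s := by rintro rfl; rw [b_last hs] at h; omega
    exact nseq_lt hk (by omega) le_rfl

theorem nseq_new_last {s : ℕ} (hs : 1 ≤ s) {k : ℕ → ℕ} (hk : ∀ i < s, 0 < k i)
    (c : Fin (s - 1) → Fin 3) : nseq (newk s c k) (2 * s - 1) + 1 = nseq k s := by
  have := (nseq_new c k hk (s - 1) (by omega)).2
  rw [show s - 1 + 1 = s by omega, a_last hs, show 2 * (s - 1) + 1 = 2 * s - 1 by omega] at this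
  exact this

theorem gw_top {s : ℕ} (hs : 1 ≤ s) {k : ℕ → ℕ} (hk : ∀ i < s, 0 < k i)
    (c : Fin (s - 1) → Fin 3) :
    TopG (nseq (newk s c k) (2 * s - 1)) (terminals s k) (terminals (2 * s - 1) (newk s c k))
      (gwE s k (alph s c) (bet s c)) := by
  have hn := nseq_new_last hs hk c
  refine ⟨?_, ?_, ?_, ?_, ?_⟩
  · rintro e ⟨i, hi, ⟨ha, rfl⟩ | ⟨ha, rfl⟩⟩
    · have := (gw_pos hs hk c hi).1 ha
      left; ext <;> simp <;> omega
    · have := (gw_pos hs hk c hi).2 ha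
      right; ext <;> simp <;> omega
  · rintro e ⟨i, hi, ⟨ha, rfl⟩ | ⟨ha, rfl⟩⟩ <;> exact ⟨i, hi, rfl⟩
  · rintro v ⟨i, hi, rfl⟩
    rcases ab_cases c i with h | h | h
    · exact ⟨_, ⟨i, hi, Or.inl ⟨h.1, rfl⟩⟩, rfl⟩
    · exact ⟨_, ⟨i, hi, Or.inr ⟨h.2, rfl⟩⟩, rfl⟩
    · exact ⟨_, ⟨i, hi, Or.inl ⟨h.1, rfl⟩⟩, rfl⟩
  · apply subset_antisymm
    · rintro v ⟨t, ht, rfl⟩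
      rcases Nat.even_or_odd' t with ⟨j, rfl | rfl⟩
      · have h1 := (nseq_new c k hk j (by omega)).1
        have hp := gw_pos hs hk c (i := j) (by omega)
        have hm : nseq k j ≤ nseq k s := nseq_mono k (by omega)
        rcases ab_cases c j with h | h | h
        · have := hp.1 h.1
          refine ⟨_, ⟨j, by omega, Or.inl ⟨h.1, rfl⟩⟩, ?_⟩
          ext <;> simp <;> omega
        · have := hp.2 h.2
          refine ⟨_, ⟨j, by omega, Or.inr ⟨h.2, rfl⟩⟩, ?_⟩
          ext <;> simp <;> omega
        · have := hp.2 h.2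
          refine ⟨_, ⟨j, by omega, Or.inr ⟨h.2, rfl⟩⟩, ?_⟩
          ext <;> simp <;> omega
      · have h1 := (nseq_new c k hk j (by omega)).2
        have hp := gw_pos hs hk c (i := j + 1) (by omega)
        have hm : nseq k (j + 1) ≤ nseq k s := nseq_mono k (by omega)
        rcases ab_cases c (j + 1) with h | h | h
        · have := hp.1 h.1
          refine ⟨_, ⟨j + 1, by omega, Or.inl ⟨h.1, rfl⟩⟩, ?_⟩
          ext <;> simp <;> omega
        · have := hp.2 h.2
          refine ⟨_, ⟨j + 1, by omega, Or.inr ⟨h.2, rfl⟩⟩, ?_⟩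
          ext <;> simp <;> omega
        · have := hp.1 h.1
          refine ⟨_, ⟨j + 1, by omega, Or.inl ⟨h.1, rfl⟩⟩, ?_⟩
          ext <;> simp <;> omega
    · rintro v ⟨e, ⟨i, hi, ⟨ha, rfl⟩ | ⟨ha, rfl⟩⟩, rfl⟩
      · have hi0 : i ≠ 0 := by rintro rfl; rw [a_zero] at ha; omega
        obtain ⟨j, rfl⟩ : ∃ j, i = j + 1 := ⟨i - 1, by omega⟩
        have h1 := (nseq_new c k hk j (by omega)).2
        have hm : nseq k (j + 1) ≤ nseq k s := nseq_mono k (by omega)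
        refine ⟨2 * j + 1, by omega, ?_⟩
        ext <;> simp <;> omega
      · have hi0 : i ≠ s := by rintro rfl; rw [b_last hs] at ha; omega
        have h1 := (nseq_new c k hk i (by omega)).1
        have hm := (gw_pos hs hk c hi).2 ha
        refine ⟨2 * i, by omega, ?_⟩
        ext <;> simp <;> omega
  · intro v hv
    rw [terminals_sum hv, hn]

theorem hE_mem {s : ℕ} (hs : 1 ≤ s) {k : ℕ → ℕ} (hk : ∀ i < s, 0 < k i)
    (c : Fin (s - 1) → Fin 3) {i : ℕ} (hi : i ≤ s) (h0 : 1 ≤ i) :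
    hE s k i ∈ gwE s k (alph s c) (bet s c) ↔ alph s c i = 1 := by
  constructor
  · rintro ⟨j, hj, ⟨ha, h⟩ | ⟨ha, h⟩⟩
    · simp only [hE, Prod.mk.injEq] at h
      have := nseq_inj hk hi hj h.2.1
      subst this; exact ha
    · simp only [hE, Prod.mk.injEq] at h
      have := nseq_lt hk (i := 0) (j := i) (by omega) hi
      omega
  · intro h; exact ⟨i, hi, Or.inl ⟨h, rfl⟩⟩

theorem vE_mem {s : ℕ} (hs : 1 ≤ s) {k : ℕ → ℕ} (hk : ∀ i < s, 0 < k i)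
    (c : Fin (s - 1) → Fin 3) {i : ℕ} (hi : i < s) :
    vE s k i ∈ gwE s k (alph s c) (bet s c) ↔ bet s c i = 1 := by
  constructor
  · rintro ⟨j, hj, ⟨ha, h⟩ | ⟨ha, h⟩⟩
    · simp only [vE, Prod.mk.injEq] at h
      have := (gw_pos hs hk c hj).1 ha
      omega
    · simp only [vE, Prod.mk.injEq] at h
      have := nseq_inj hk hi.le hj h.2.1
      subst this; exact ha
  · intro h; exact ⟨i, hi.le, Or.inr ⟨h, rfl⟩⟩

theorem gwE_inj {s : ℕ} (hs : 1 ≤ s) {k : ℕ → ℕ} (hk : ∀ i < s, 0 < k i)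
    {c c' : Fin (s - 1) → Fin 3}
    (h : gwE s k (alph s c) (bet s c) = gwE s k (alph s c') (bet s c')) : c = c' := by
  funext j
  have h1 := hE_mem hs hk c (i := j + 1) (by omega) (by omega)
  have h2 := hE_mem hs hk c' (i := j + 1) (by omega) (by omega)
  have h3 := vE_mem hs hk c (i := j + 1) (by omega)
  have h4 := vE_mem hs hk c' (i := j + 1) (by omega)
  rw [h] at h1 h3
  have h5 := h1.symm.trans h2
  have h6 := h3.symm.trans h4
  have ea : ∀ c : Fin (s - 1) → Fin 3, alph s c (j + 1) = aW3 (c j) := by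
    intro c; simp [alph]
  have eb : ∀ c : Fin (s - 1) → Fin 3, bet s c (j + 1) = bW3 (c j) := by
    intro c; simp [bet]
  rw [ea, ea] at h5
  rw [eb, eb] at h6
  generalize c j = x at h5 h6
  generalize c' j = y at h5 h6
  revert x y
  unfold aW3 bW3
  decide

theorem gwE_exists {s : ℕ} (hs : 1 ≤ s) {k : ℕ → ℕ} (hk : ∀ i < s, 0 < k i) {γ : LGraph}
    (h : FaceI (nseq k s) (terminals s k) γ) :
    ∃ c : Fin (s - 1) → Fin 3, gwE s k (alph s c) (bet s c) = topE (nseq k s) γ := by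
  have hn : 0 < nseq k s := by
    have := nseq_lt hk (i := 0) (j := s) (by omega) le_rfl
    omega
  -- every terminal is entered
  have hin : ∀ i ≤ s, (i ≠ 0 ∧ hE s k i ∈ γ.E) ∨ (i ≠ s ∧ vE s k i ∈ γ.E) := by
    intro i hi
    have hm := nseq_mono k hi
    have hv := h.term (⟨i, hi, rfl⟩ : (nseq k i, nseq k s - nseq k i) ∈ terminals s k)
    rcases h.inc _ hv with h0 | ⟨u, hu⟩
    · simp only [Prod.mk.injEq] at h0; omega
    · rcases (h.edge _ hu).1 with h1 | h1
      · simp only [Prod.mk.injEq] at h1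
        left
        refine ⟨?_, ?_⟩
        · rintro rfl; simp [nseq] at h1
        · have : hE s k i = (u, (nseq k i, nseq k s - nseq k i)) := by
            unfold hE; ext <;> simp <;> omega
          rw [this]; exact hu
      · simp only [Prod.mk.injEq] at h1
        right
        refine ⟨?_, ?_⟩
        · rintro rfl; omega
        · have : vE s k i = (u, (nseq k i, nseq k s - nseq k i)) := by
            unfold vE; ext <;> simp <;> omega
          rw [this]; exact hu
  -- every top edge is one of these
  have htop : ∀ e ∈ topE (nseq k s) γ, ∃ i ≤ s, (i ≠ 0 ∧ e = hE s k i) ∨ (i ≠ s ∧ e = vE s k i) := by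
    rintro ⟨u, v⟩ ⟨he, hsum⟩
    simp only at hsum
    obtain ⟨h1, h2, h3⟩ := h.edge _ he
    have hv : v ∈ terminals s k := by
      rcases h.out _ h3 with h4 | ⟨x, hx⟩
      · exact h4
      · have h5 := h.edge _ hx
        have h6 := gridStep_sum h5.1
        have h7 := h.bd _ h5.2.2
        simp only at h6 h7
        omega
    obtain ⟨i, hi, rfl⟩ := hv
    refine ⟨i, hi, ?_⟩
    have hm := nseq_mono k hi
    rcases h1 with h1 | h1
    · simp only [Prod.mk.injEq] at h1
      left
      refine ⟨?_, ?_⟩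
      · rintro rfl; simp [nseq] at h1
      · unfold hE; ext <;> simp <;> omega
    · simp only [Prod.mk.injEq] at h1
      right
      refine ⟨?_, ?_⟩
      · rintro rfl; omega
      · unfold vE; ext <;> simp <;> omega
  let c : Fin (s - 1) → Fin 3 := fun j =>
    if hE s k (j + 1) ∈ γ.E then (if vE s k (j + 1) ∈ γ.E then 2 else 0) else 1
  have hA : ∀ i ≤ s, (alph s c i = 1 ↔ i ≠ 0 ∧ hE s k i ∈ γ.E) := by
    intro i hi
    rcases Nat.eq_zero_or_pos i with rfl | h0
    · simp [a_zero]
    rcases hi.eq_or_lt with rfl | h1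
    · have := hin i le_rfl
      simp only [a_last hs, true_iff]
      tauto
    · have ea : alph s c i = aW3 (c ⟨i - 1, by omega⟩) := by
        unfold alph; rw [if_neg (by omega), dif_pos (by omega)]
      have h2 := hin i hi
      have e1 : i - 1 + 1 = i := by omega
      rw [ea]
      simp only [c, e1]
      split_ifs with h3 h4 <;> simp [aW3, h3] <;> omega
  have hB : ∀ i ≤ s, (bet s c i = 1 ↔ i ≠ s ∧ vE s k i ∈ γ.E) := by
    intro i hi
    rcases Nat.eq_zero_or_pos i with rfl | h0
    · have := hin 0 hi
      simp only [b_zero, true_iff]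
      tauto
    rcases hi.eq_or_lt with rfl | h1
    · simp [b_last hs]
    · have ea : bet s c i = bW3 (c ⟨i - 1, by omega⟩) := by
        unfold bet; rw [if_neg (by omega), dif_pos (by omega)]
      have h2 := hin i hi
      have e1 : i - 1 + 1 = i := by omega
      rw [ea]
      simp only [c, e1]
      split_ifs with h3 h4
      · simp [bW3, h4]; omega
      · simp [bW3, h4]
      · have h5 : vE s k i ∈ γ.E := by tauto
        simp [bW3, h5]; omega
  refine ⟨c, subset_antisymm ?_ ?_⟩
  · intro e he
    obtain ⟨i, hi, ⟨ha, rfl⟩ | ⟨ha, rfl⟩⟩ := mem_gwE.1 he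
    · have := nseq_mono k hi
      exact ⟨((hA i hi).1 ha).2, by simp only [hE]; omega⟩
    · have := nseq_mono k hi
      exact ⟨((hB i hi).1 ha).2, by simp only [vE]; omega⟩
  · intro e he
    obtain ⟨i, hi, ⟨h0, rfl⟩ | ⟨h0, rfl⟩⟩ := htop e he
    · exact mem_gwE.2 ⟨i, hi, Or.inl ⟨(hA i hi).2 ⟨h0, he.1⟩, rfl⟩⟩
    · exact mem_gwE.2 ⟨i, hi, Or.inr ⟨(hB i hi).2 ⟨h0, he.1⟩, rfl⟩⟩

theorem terminals_ncard {s : ℕ} {k : ℕ → ℕ} (hk : ∀ i < s, 0 < k i) :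
    (terminals s k).ncard = s + 1 := by
  have : terminals s k = ((Finset.range (s + 1)).image
      (fun i => (nseq k i, nseq k s - nseq k i)) : Finset (ℕ × ℕ)) := by
    ext v
    simp only [terminals, Set.mem_setOf_eq, Finset.coe_image, Set.mem_image, Finset.mem_coe,
      Finset.mem_range]
    constructor
    · rintro ⟨i, hi, rfl⟩; exact ⟨i, by omega, rfl⟩
    · rintro ⟨i, hi, rfl⟩; exact ⟨i, by omega, rfl⟩
  rw [this, Set.ncard_coe_finset, Finset.card_image_of_injOn, Finset.card_range]
  intro i hi j hj hij
  simp only [Finset.coe_range, Set.mem_Iio] at hi hj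
  simp only [Prod.mk.injEq] at hij
  exact nseq_inj hk (by omega) (by omega) hij.1

theorem gwE_ncard {s : ℕ} (hs : 1 ≤ s) {k : ℕ → ℕ} (hk : ∀ i < s, 0 < k i)
    (c : Fin (s - 1) → Fin 3) :
    (gwE s k (alph s c) (bet s c)).Finite ∧
    (gwE s k (alph s c) (bet s c)).ncard = s + 1 + wsize s c := by
  let A := (Finset.range (s + 1)).filter (fun i => alph s c i = 1)
  let B := (Finset.range (s + 1)).filter (fun i => bet s c i = 1)
  have e : gwE s k (alph s c) (bet s c) = ((A.image (hE s k) ∪ B.image (vE s k) : Finset _) :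
      Set ((ℕ × ℕ) × (ℕ × ℕ))) := by
    ext v
    rw [mem_gwE]
    simp only [A, B, Finset.coe_union, Finset.coe_image, Set.mem_union, Set.mem_image,
      Finset.mem_coe, Finset.mem_filter, Finset.mem_range]
    constructor
    · rintro ⟨i, hi, ⟨ha, rfl⟩ | ⟨ha, rfl⟩⟩
      · exact Or.inl ⟨i, ⟨by omega, ha⟩, rfl⟩
      · exact Or.inr ⟨i, ⟨by omega, ha⟩, rfl⟩
    · rintro (⟨i, ⟨hi, ha⟩, rfl⟩ | ⟨i, ⟨hi, ha⟩, rfl⟩)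
      · exact ⟨i, by omega, Or.inl ⟨ha, rfl⟩⟩
      · exact ⟨i, by omega, Or.inr ⟨ha, rfl⟩⟩
  refine ⟨by rw [e]; exact Finset.finite_toSet _, ?_⟩
  rw [e, Set.ncard_coe_finset, Finset.card_union_of_disjoint, Finset.card_image_of_injOn,
    Finset.card_image_of_injOn]
  · have hA : A.card = ∑ i ∈ Finset.range (s + 1), alph s c i := by
      rw [Finset.card_filter]
      refine Finset.sum_congr rfl fun i _ => ?_
      rcases ab_cases c i with h | h | h <;> simp [h]
    have hB : B.card = ∑ i ∈ Finset.range (s + 1), bet s c i := by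
      rw [Finset.card_filter]
      refine Finset.sum_congr rfl fun i _ => ?_
      rcases ab_cases c i with h | h | h <;> simp [h]
    rw [hA, hB, ← Finset.sum_add_distrib]
    have h1 : ∀ i ∈ Finset.range (s + 1), alph s c i + bet s c i
        = 1 + alph s c i * bet s c i := by
      intro i _
      rcases ab_cases c i with h | h | h <;> simp [h]
    rw [Finset.sum_congr rfl h1, Finset.sum_add_distrib]
    have h2 : ∑ i ∈ Finset.range (s + 1), alph s c i * bet s c i = wsize s c := by
      unfold wsize
      rw [Finset.sum_range_succ, b_last hs]
      obtain ⟨t, rfl⟩ : ∃ t, s = t + 1 := ⟨s - 1, by omega⟩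
      rw [Finset.sum_range_succ', a_zero]
      simp
    rw [h2]
    simp
  · intro i hi j hj hij
    simp only [B, Finset.coe_filter, Finset.mem_range, Set.mem_setOf_eq] at hi hj
    simp only [vE, Prod.mk.injEq] at hij
    exact nseq_inj hk (by omega) (by omega) hij.2.1
  · intro i hi j hj hij
    simp only [A, Finset.coe_filter, Finset.mem_range, Set.mem_setOf_eq] at hi hj
    simp only [hE, Prod.mk.injEq] at hij
    exact nseq_inj hk (by omega) (by omega) hij.2.1
  · rw [Finset.disjoint_left]
    intro x hx hy
    simp only [A, B, Finset.mem_image, Finset.mem_filter, Finset.mem_range] at hx hy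
    obtain ⟨i, ⟨hi, ha⟩, rfl⟩ := hx
    obtain ⟨j, ⟨hj, hb⟩, hij⟩ := hy
    have := (gw_pos hs hk c (i := i) (by omega)).1 ha
    simp only [hE, vE, Prod.mk.injEq] at hij
    omega

theorem gw_eq (s : ℕ) (k : ℕ → ℕ) (c : Fin (s - 1) → Fin 3) :
    gwGraph3 s k c = egraph (gwE s k (alph s c) (bet s c)) := rfl

theorem part1 {s : ℕ} (hs : 1 ≤ s) {k : ℕ → ℕ} (hk : ∀ i < s, 0 < k i)
    (c : Fin (s - 1) → Fin 3) (σ : LGraph) (h : IsLadderFace (2 * s - 1) (newk s c k) σ) :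
    IsLadderFace s k (ugraph σ (gwGraph3 s k c)) ∧
      ldim (ugraph σ (gwGraph3 s k c)) = (wsize s c : ℤ) + ldim σ := by
  have hG := gw_top hs hk c
  have hF := (face_iff _ _ _).1 h
  have hc := gwE_ncard hs hk c
  constructor
  · rw [face_iff, gw_eq, ← nseq_new_last hs hk c]
    exact face_union hG hF
  · rw [gw_eq, ldim_union hG hF hc.1, hc.2, terminals_ncard hk]
    push_cast
    ring

theorem part2_unique {s : ℕ} (hs : 1 ≤ s) {k : ℕ → ℕ} (hk : ∀ i < s, 0 < k i)
    {c c' : Fin (s - 1) → Fin 3} {σ σ' : LGraph} (h : IsLadderFace (2 * s - 1) (newk s c k) σ)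
    (h' : IsLadderFace (2 * s - 1) (newk s c' k) σ')
    (he : ugraph σ (gwGraph3 s k c) = ugraph σ' (gwGraph3 s k c')) : c = c' ∧ σ = σ' := by
  have hn := nseq_new_last hs hk c
  have hn' := nseq_new_last hs hk c'
  have t := trunc_union (gw_top hs hk c) ((face_iff _ _ _).1 h)
  have t' := trunc_union (gw_top hs hk c') ((face_iff _ _ _).1 h')
  have hnn : nseq (newk s c k) (2 * s - 1) = nseq (newk s c' k) (2 * s - 1) := by omega
  rw [gw_eq, gw_eq] at he
  rw [he, hnn] at t
  exact ⟨gwE_inj hs hk (t.2.symm.trans t'.2), t.1.symm.trans t'.1⟩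

theorem part2_exists {s : ℕ} (hs : 1 ≤ s) {k : ℕ → ℕ} (hk : ∀ i < s, 0 < k i)
    {γ : LGraph} (h : IsLadderFace s k γ) : ∃ (c : Fin (s - 1) → Fin 3) (σ : LGraph),
      IsLadderFace (2 * s - 1) (newk s c k) σ ∧ γ = ugraph σ (gwGraph3 s k c) := by
  have hF := (face_iff _ _ _).1 h
  obtain ⟨c, hc⟩ := gwE_exists hs hk hF
  have hn := nseq_new_last hs hk c
  have hG := gw_top hs hk c
  rw [← hn] at hF hc
  obtain ⟨h1, h2⟩ := trunc_face hG.sum hF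
  rw [← hc] at h1 h2
  refine ⟨c, trunc (nseq (newk s c k) (2 * s - 1)) γ, ?_, h2⟩
  rw [face_iff, hG.src]
  exact h1

theorem part3 {s : ℕ} (hs : 1 ≤ s) {k : ℕ → ℕ} (hk : ∀ i < s, 0 < k i) :
    Set.ncard {γ : LGraph | IsLadderFace s k γ ∧ ldim γ = 0} =
      ∑ c ∈ Finset.univ.filter (fun c : Fin (s - 1) → Fin 3 => wsize s c = 0),
        Set.ncard {γ : LGraph | IsLadderFace (2 * s - 1) (newk s c k) γ ∧ ldim γ = 0} := by
  let F : (Fin (s - 1) → Fin 3) → Set LGraph := fun c =>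
    {γ : LGraph | IsLadderFace (2 * s - 1) (newk s c k) γ ∧ ldim γ = 0}
  have hfin : ∀ c, (F c).Finite := fun c => (faces_finite _ _).subset fun γ h => h.1
  let I := {c : Fin (s - 1) → Fin 3 // wsize s c = 0}
  have hfin' : ∀ c : I, Finite (F c.1) := fun c => hfin c.1
  let Φ : (Σ c : I, F c.1) → {γ : LGraph | IsLadderFace s k γ ∧ ldim γ = 0} := fun x =>
    ⟨ugraph x.2.1 (gwGraph3 s k x.1.1), by
      have h := part1 hs hk x.1.1 x.2.1 x.2.2.1
      refine ⟨h.1, ?_⟩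
      rw [h.2, x.1.2, x.2.2.2]; simp⟩
  have hΦ : Function.Bijective Φ := by
    constructor
    · rintro ⟨⟨c, hc⟩, ⟨σ, hσ⟩⟩ ⟨⟨c', hc'⟩, ⟨σ', hσ'⟩⟩ h
      obtain ⟨rfl, rfl⟩ := part2_unique hs hk hσ.1 hσ'.1 (congrArg Subtype.val h)
      rfl
    · rintro ⟨γ, hγ, hd⟩
      obtain ⟨c, σ, hσ, rfl⟩ := part2_exists hs hk hγ
      rw [(part1 hs hk c σ hσ).2] at hd
      have := ldim_nonneg ((face_iff _ _ _).1 hσ)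
      exact ⟨⟨⟨c, by omega⟩, ⟨σ, hσ, by omega⟩⟩, rfl⟩
  rw [← Nat.card_coe_set_eq, ← Nat.card_congr (Equiv.ofBijective Φ hΦ), Nat.card_sigma]
  rw [Finset.sum_subtype (p := fun c : Fin (s - 1) → Fin 3 => wsize s c = 0) _ (by simp)]
  exact Finset.sum_congr rfl fun c _ => Nat.card_coe_set_eq _

end Aux

/-- proof of Lemma 3.7, and Corollary 1.14. For `k ∈ ℤ^s_{≥1}`
there is a bijection `(w, σ) ↦ σ ∪ g_w` between pairs of an element
`w ∈ W_{s-1}` (encoded by `c : Fin (s-1) → Fin 3`) together with a face `σ` of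
`Γ_{r_w(k) * w̃}`, and faces of `Γ_k`; it satisfies
`dim (σ ∪ g_w) = |w| + dim σ`. Consequently the number of vertices satisfies
`V_k = Σ_{w ∈ W_{s-1}, |w| = 0} V_{r_w(k)}`. -/
theorem face_decomposition (s : ℕ) (hs : 1 ≤ s) (k : ℕ → ℕ)
    (hk : ∀ i < s, 0 < k i) :
    (∀ (c : Fin (s - 1) → Fin 3) (σ : LGraph),
      IsLadderFace (2 * s - 1) (newk s c k) σ →
        IsLadderFace s k (ugraph σ (gwGraph3 s k c)) ∧
        ldim (ugraph σ (gwGraph3 s k c)) = (wsize s c : ℤ) + ldim σ) ∧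
    (∀ γ : LGraph, IsLadderFace s k γ →
      ∃! p : (Fin (s - 1) → Fin 3) × LGraph,
        IsLadderFace (2 * s - 1) (newk s p.1 k) p.2 ∧
        γ = ugraph p.2 (gwGraph3 s k p.1)) ∧
    (Set.ncard {γ : LGraph | IsLadderFace s k γ ∧ ldim γ = 0} =
      ∑ c ∈ Finset.univ.filter (fun c : Fin (s - 1) → Fin 3 => wsize s c = 0),
        Set.ncard {γ : LGraph | IsLadderFace (2 * s - 1) (newk s c k) γ ∧ ldim γ = 0}) := by
  refine ⟨fun c σ h => part1 hs hk c σ h, fun γ hγ => ?_, part3 hs hk⟩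
  obtain ⟨c, σ, hσ, he⟩ := part2_exists hs hk hγ
  refine ⟨(c, σ), ⟨hσ, he⟩, ?_⟩
  rintro ⟨c', σ'⟩ ⟨h1, h2⟩
  obtain ⟨rfl, rfl⟩ := part2_unique hs hk h1 hσ (h2.symm.trans he)
  rfl
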